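/- arXiv:2503.10007 — 2 statements merged into one kernel-verified Lean document; each statement's English description precedes it below -/
import Mathlib

section
/- For every unit vector |ψ⟩ ∈ ℂ², every θ ∈ ℝ, and every m ∈ {0,1}, applying the controlled-Z gate to |ψ⟩⊗|+⟩, then R_Z(−θ) followed by H to the first qubit, and projecting the first qubit onto |m⟩ leaves the second qubit in the (unnormalized) state (1/√2)·X^m H R_Z(−θ)|ψ⟩; that is, (⟨m|⊗I)·((H·R_Z(−θ))⊗I)·CZ·(|ψ⟩⊗|+⟩) = (1/√2)·X^m H R_Z(−θ)|ψ⟩. -/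
open Matrix Complex Kronecker

noncomputable section

/-- Pauli X gate. -/
def X : Matrix (Fin 2) (Fin 2) ℂ := !![0, 1; 1, 0]

/-- Pauli Z gate. -/
def Z : Matrix (Fin 2) (Fin 2) ℂ := !![1, 0; 0, -1]

/-- Hadamard gate. -/
def H : Matrix (Fin 2) (Fin 2) ℂ := ((Real.sqrt 2 : ℂ))⁻¹ • !![1, 1; 1, -1]

/-- Phase gate `S = diag(1, i)`. -/
def S : Matrix (Fin 2) (Fin 2) ℂ := !![1, 0; 0, Complex.I]

/-- `T = diag(1, e^{iπ/4})`. -/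
def T : Matrix (Fin 2) (Fin 2) ℂ := !![1, 0; 0, Complex.exp (Real.pi / 4 * Complex.I)]

/-- Z-rotation `R_Z(θ) = diag(1, e^{iθ})`. -/
def RZ (θ : ℝ) : Matrix (Fin 2) (Fin 2) ℂ := !![1, 0; 0, Complex.exp (θ * Complex.I)]

/-- Computational basis state `|0⟩`. -/
def ket0 : Fin 2 → ℂ := ![1, 0]

/-- Computational basis state `|1⟩`. -/
def ket1 : Fin 2 → ℂ := ![0, 1]

/-- Rotated plus state `|+_θ⟩ = (|0⟩ + e^{iθ}|1⟩)/√2`. -/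
def plusθ (θ : ℝ) : Fin 2 → ℂ := ((Real.sqrt 2 : ℂ))⁻¹ • ![1, Complex.exp (θ * Complex.I)]

/-- Rotated minus state `|−_θ⟩ = (|0⟩ − e^{iθ}|1⟩)/√2`. -/
def minusθ (θ : ℝ) : Fin 2 → ℂ := ((Real.sqrt 2 : ℂ))⁻¹ • ![1, -Complex.exp (θ * Complex.I)]

/-- `|+⟩ = (|0⟩+|1⟩)/√2`. -/
def plus : Fin 2 → ℂ := ((Real.sqrt 2 : ℂ))⁻¹ • ![1, 1]

/-- Kronecker (tensor) product of two qubit state vectors. -/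
def kronVec (v w : Fin 2 → ℂ) : Fin 2 × Fin 2 → ℂ := fun p => v p.1 * w p.2

/-- Controlled-Z gate `CZ = diag(1,1,1,−1)` on two qubits. -/
def CZ : Matrix (Fin 2 × Fin 2) (Fin 2 × Fin 2) ℂ :=
  Matrix.diagonal fun p => if p.1 = 1 ∧ p.2 = 1 then -1 else 1

/-- Controlled-NOT with control on the first tensor factor:
`CNOT12 (|a⟩⊗|b⟩) = |a⟩⊗|a⊕b⟩`. -/
def CNOT12 : Matrix (Fin 2 × Fin 2) (Fin 2 × Fin 2) ℂ :=
  Matrix.of fun p q => if p.1 = q.1 ∧ p.2 = q.1 + q.2 then 1 else 0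

/-- Controlled-NOT with control on the second tensor factor:
`CNOT21 (|a⟩⊗|b⟩) = |a⊕b⟩⊗|b⟩`. -/
def CNOT21 : Matrix (Fin 2 × Fin 2) (Fin 2 × Fin 2) ℂ :=
  Matrix.of fun p q => if p.1 = q.1 + q.2 ∧ p.2 = q.2 then 1 else 0

/-- Outer product `|v⟩⟨v|` of a qubit vector. -/
def outer (v : Fin 2 → ℂ) : Matrix (Fin 2) (Fin 2) ℂ := Matrix.of fun i j => v i * star (v j)

/-!
Identify `ℂ² ⊗ ℂ²` with the `2 × 2` matrices through `vec`, whose *column* index is the first tensor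
factor. Then `CZ (|ψ⟩ ⊗ |+⟩)` is the matrix `H diag(ψ)`, and applying `A` to the first qubit and
projecting it onto `⟨m|` multiplies this matrix by the `m`-th row of `A`. Only the `m`-th row of
`A = H diag(d)` therefore matters: as a diagonal matrix it is `(1/√2) Zᵐ diag(d)`, and `Zᵐ` becomes
`Xᵐ` when it is moved through `H`.
-/

section

variable {R k l n : Type*} [CommSemiring R] [Fintype l] [DecidableEq l] [Fintype n]

lemma kronecker_one_mulVec_vec_apply (A : Matrix k n R) (M : Matrix l n R) (i : k) (j : l) :
    ((A ⊗ₖ (1 : Matrix l l R)) *ᵥ vec M) (i, j) = (M *ᵥ A i) j := by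
  rw [kronecker_mulVec_vec, Matrix.one_mul]
  rfl

lemma diagonal_mulVec_comm (v w : l → R) : diagonal v *ᵥ w = diagonal w *ᵥ v := by
  ext i
  rw [mulVec_diagonal, mulVec_diagonal, mul_comm]

end

lemma CZ_mulVec_kronVec_plus (ψ : Fin 2 → ℂ) :
    CZ *ᵥ kronVec ψ plus = vec (H * diagonal ψ) := by
  ext ⟨a, b⟩
  rw [CZ, mulVec_diagonal, vec, mul_diagonal]
  fin_cases a <;> fin_cases b <;> simp [kronVec, plus, H, mul_comm]

lemma kronecker_one_mul_CZ_mulVec_kronVec_plus (A : Matrix (Fin 2) (Fin 2) ℂ) (ψ : Fin 2 → ℂ)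
    (m : Fin 2) :
    (fun i => (((A ⊗ₖ (1 : Matrix (Fin 2) (Fin 2) ℂ)) * CZ) *ᵥ kronVec ψ plus) (m, i))
      = (H * diagonal (A m)) *ᵥ ψ := by
  ext i
  rw [← mulVec_mulVec, CZ_mulVec_kronVec_plus, kronecker_one_mulVec_vec_apply, ← mulVec_mulVec,
    diagonal_mulVec_comm, mulVec_mulVec]

lemma diagonal_H_apply (m : Fin 2) :
    diagonal (H m) = ((Real.sqrt 2 : ℂ))⁻¹ • Z ^ m.val := by
  ext i j
  fin_cases m <;> fin_cases i <;> fin_cases j <;> simp [H, Z]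

lemma diagonal_H_mul_diagonal_apply (d : Fin 2 → ℂ) (m : Fin 2) :
    diagonal ((H * diagonal d) m) = ((Real.sqrt 2 : ℂ))⁻¹ • (Z ^ m.val * diagonal d) := by
  have row_eq : (H * diagonal d) m = fun i => H m i * d i := by
    ext i
    exact mul_diagonal d H m i
  rw [row_eq, ← diagonal_mul_diagonal, diagonal_H_apply, smul_mul]

lemma semiconjBy_H_Z_X : SemiconjBy H Z X := by
  simp [SemiconjBy, H, Z, X]

lemma RZ_eq_diagonal (θ : ℝ) : RZ θ = diagonal ![1, Complex.exp (θ * Complex.I)] := by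
  ext i j
  fin_cases i <;> fin_cases j <;> simp [RZ]

theorem mbqc_gate_teleportation_general (ψ d : Fin 2 → ℂ) (m : Fin 2) :
    (fun i => ((((H * diagonal d) ⊗ₖ (1 : Matrix (Fin 2) (Fin 2) ℂ)) * CZ) *ᵥ
        kronVec ψ plus) (m, i))
      = ((Real.sqrt 2 : ℂ))⁻¹ • ((X ^ m.val * (H * diagonal d)) *ᵥ ψ) := by
  have H_mul_Z_pow : H * Z ^ m.val = X ^ m.val * H := semiconjBy_H_Z_X.pow_right m.val
  rw [kronecker_one_mul_CZ_mulVec_kronVec_plus, diagonal_H_mul_diagonal_apply, Matrix.mul_smul,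
    ← Matrix.mul_assoc, H_mul_Z_pow, Matrix.mul_assoc, smul_mulVec]

/-- MBQC gate teleportation of `J(θ) = H R_Z(θ)` via a rotated-basis measurement:
`(⟨m|⊗I)·((H·R_Z(−θ))⊗I)·CZ·(|ψ⟩⊗|+⟩) = (1/√2)·Xᵐ H R_Z(−θ)|ψ⟩`. -/
theorem mbqc_gate_teleportation
    (ψ : Fin 2 → ℂ) (hψ : ∑ i, Complex.normSq (ψ i) = 1) (θ : ℝ) (m : Fin 2) :
    (fun i => ((((H * RZ (-θ)) ⊗ₖ (1 : Matrix (Fin 2) (Fin 2) ℂ)) * CZ).mulVec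
        (kronVec ψ plus)) (m, i))
      = ((Real.sqrt 2 : ℂ))⁻¹ • (X ^ m.val * (H * RZ (-θ))).mulVec ψ := by
  rw [RZ_eq_diagonal]
  exact mbqc_gate_teleportation_general ψ _ m

end
end

section
/- For all a, b, m ∈ {0,1}, every θ ∈ ℝ, and every unit vector |ψ⟩ ∈ ℂ²: applying CNOT with control on the second qubit (prepared in |+_θ⟩) and target on the first qubit (prepared in the QHE-encrypted state X^a Z^b|ψ⟩), and then projecting the first qubit onto the computational-basis state |m⟩, leaves the second qubit in the (unnormalized) state (1/√2)·R_Z(θ)·X^{m⊕a} Z^b|ψ⟩, where ⊕ is XOR; in particular the measurement outcome m occurs with probability exactly 1/2 irrespective of a, b, θ, |ψ⟩. -/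
open Matrix Complex Kronecker

noncomputable section

/-!
Adding a fixed bit is an involution, so `CNOT21` pulls the amplitude at `(m, j)` back from
`(m + j, j)`. Hence projecting `CNOT21 (φ ⊗ χ)` onto `m` leaves the amplitudes `χ j * φ (m + j)`,
which is `X ^ m` applied to `φ` followed by the diagonal matrix of `χ`. For `χ = |+_θ⟩` that
matrix is `R_Z(θ) / √2`; as `R_Z(θ)`, `X` and `Z` are unitary, the probability is
`|1 / √2|² = 1 / 2`.
-/

theorem star_dotProduct_self_eq_sum_normSq {n : Type*} [Fintype n] (v : n → ℂ) :
    star v ⬝ᵥ v = ((∑ i, normSq (v i) : ℝ) : ℂ) := by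
  simp only [dotProduct, Pi.star_apply, RCLike.star_def, normSq_eq_conj_mul_self, ofReal_sum]

theorem sum_normSq_mulVec_of_conjTranspose_mul_self {m n : Type*} [Fintype m] [Fintype n]
    [DecidableEq n] {A : Matrix m n ℂ} (hA : Aᴴ * A = 1) (v : n → ℂ) :
    ∑ i, normSq ((A *ᵥ v) i) = ∑ j, normSq (v j) := by
  apply ofReal_injective
  calc ((∑ i, normSq ((A *ᵥ v) i) : ℝ) : ℂ) = star (A *ᵥ v) ⬝ᵥ (A *ᵥ v) :=
        (star_dotProduct_self_eq_sum_normSq _).symm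
    _ = star v ⬝ᵥ ((Aᴴ * A) *ᵥ v) := by rw [star_mulVec, ← dotProduct_mulVec, mulVec_mulVec]
    _ = star v ⬝ᵥ v := by rw [hA, one_mulVec]
    _ = ((∑ j, normSq (v j) : ℝ) : ℂ) := star_dotProduct_self_eq_sum_normSq v

theorem sum_normSq_smul {n : Type*} [Fintype n] (c : ℂ) (v : n → ℂ) :
    ∑ i, normSq ((c • v) i) = normSq c * ∑ i, normSq (v i) := by
  simp only [Pi.smul_apply, smul_eq_mul, normSq_mul, Finset.mul_sum]

theorem normSq_inv_sqrt_two : normSq ((Real.sqrt 2 : ℂ))⁻¹ = 1 / 2 := by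
  rw [normSq_inv, normSq_ofReal, Real.mul_self_sqrt zero_le_two, one_div]

theorem X_sq : X ^ 2 = 1 := by
  simp [X, pow_two, one_fin_two]

theorem X_mem_unitaryGroup : X ∈ unitaryGroup (Fin 2) ℂ := by
  have star_X : star X = X := by
    ext i j; fin_cases i <;> fin_cases j <;> simp [X]
  rw [mem_unitaryGroup_iff, star_X, ← pow_two, X_sq]

theorem Z_mem_unitaryGroup : Z ∈ unitaryGroup (Fin 2) ℂ := by
  rw [mem_unitaryGroup_iff]
  ext i j; fin_cases i <;> fin_cases j <;> simp [Z, mul_apply]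

theorem RZ_mem_unitaryGroup (θ : ℝ) : RZ θ ∈ unitaryGroup (Fin 2) ℂ := by
  rw [mem_unitaryGroup_iff]
  ext i j; fin_cases i <;> fin_cases j <;>
    simp [RZ, mul_apply, mul_conj, normSq_eq_norm_sq, norm_exp_ofReal_mul_I]

theorem X_pow_val_add (a b : Fin 2) : X ^ (a + b).val = X ^ a.val * X ^ b.val := by
  rw [Fin.val_add, ← pow_eq_pow_mod _ X_sq, pow_add]

theorem X_pow_val_mulVec_apply (a i : Fin 2) (φ : Fin 2 → ℂ) :
    (X ^ a.val *ᵥ φ) i = φ (a + i) := by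
  fin_cases a <;> fin_cases i <;> simp [X, mulVec, dotProduct]

theorem CNOT21_mulVec_apply (v : Fin 2 × Fin 2 → ℂ) (i j : Fin 2) :
    (CNOT21 *ᵥ v) (i, j) = v (i + j, j) := by
  have preimage (q : Fin 2 × Fin 2) : (i = q.1 + q.2 ∧ j = q.2) ↔ q = (i + j, j) := by
    revert i j q; decide
  simp only [CNOT21, mulVec, dotProduct, of_apply, preimage, ite_mul, one_mul, zero_mul,
    Finset.sum_ite_eq', Finset.mem_univ, if_true]

theorem CNOT21_mulVec_kronVec_apply (φ χ : Fin 2 → ℂ) (m j : Fin 2) :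
    (CNOT21 *ᵥ kronVec φ χ) (m, j) = χ j * (X ^ m.val *ᵥ φ) j := by
  rw [CNOT21_mulVec_apply, X_pow_val_mulVec_apply, kronVec, mul_comm]

theorem inv_sqrt_two_smul_RZ_mulVec (θ : ℝ) (φ : Fin 2 → ℂ) :
    ((Real.sqrt 2 : ℂ))⁻¹ • (RZ θ *ᵥ φ) = plusθ θ * φ := by
  ext i; fin_cases i <;> simp [RZ, plusθ, dotProduct, mul_assoc]

theorem CNOT21_mulVec_kronVec_plusθ (φ : Fin 2 → ℂ) (θ : ℝ) (m : Fin 2) :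
    (fun i => (CNOT21 *ᵥ kronVec φ (plusθ θ)) (m, i))
      = ((Real.sqrt 2 : ℂ))⁻¹ • ((RZ θ * X ^ m.val) *ᵥ φ) := by
  rw [← mulVec_mulVec, inv_sqrt_two_smul_RZ_mulVec]
  exact funext (CNOT21_mulVec_kronVec_apply φ (plusθ θ) m)

/-- Injection of a QOTP/QHE ciphertext into a blind computation:
applying `CNOT` (control = second qubit prepared in `|+_θ⟩`, target = encrypted data qubit
`X^a Z^b |ψ⟩`) and projecting the first qubit onto `|m⟩` leaves the second qubit in
`(1/√2)·R_Z(θ)·X^{m⊕a} Z^b |ψ⟩`; each outcome `m` occurs with probability `1/2`. -/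
theorem qhe_ciphertext_injection
    (a b m : Fin 2) (θ : ℝ) (ψ : Fin 2 → ℂ) (hψ : ∑ i, Complex.normSq (ψ i) = 1) :
    (fun i => (CNOT21.mulVec
        (kronVec ((X ^ a.val * Z ^ b.val).mulVec ψ) (plusθ θ))) (m, i))
        = ((Real.sqrt 2 : ℂ))⁻¹ • (RZ θ * X ^ (m + a).val * Z ^ b.val).mulVec ψ
    ∧ ∑ i, Complex.normSq ((CNOT21.mulVec
        (kronVec ((X ^ a.val * Z ^ b.val).mulVec ψ) (plusθ θ))) (m, i)) = 1 / 2 := by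
  have post_state : (fun i => (CNOT21 *ᵥ
      kronVec ((X ^ a.val * Z ^ b.val) *ᵥ ψ) (plusθ θ)) (m, i))
        = ((Real.sqrt 2 : ℂ))⁻¹ • ((RZ θ * X ^ (m + a).val * Z ^ b.val) *ᵥ ψ) := by
    rw [CNOT21_mulVec_kronVec_plusθ, mulVec_mulVec, X_pow_val_add]
    simp only [mul_assoc]
  have gate_unitary : RZ θ * X ^ (m + a).val * Z ^ b.val ∈ unitaryGroup (Fin 2) ℂ :=
    mul_mem (mul_mem (RZ_mem_unitaryGroup θ) (pow_mem X_mem_unitaryGroup _))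
      (pow_mem Z_mem_unitaryGroup _)
  refine ⟨post_state, ?_⟩
  calc _ = ∑ i, normSq ((((Real.sqrt 2 : ℂ))⁻¹ •
          ((RZ θ * X ^ (m + a).val * Z ^ b.val) *ᵥ ψ)) i) := by rw [← post_state]
    _ = 1 / 2 * ∑ i, normSq (((RZ θ * X ^ (m + a).val * Z ^ b.val) *ᵥ ψ) i) := by
        rw [sum_normSq_smul, normSq_inv_sqrt_two]
    _ = 1 / 2 * ∑ i, normSq (ψ i) := by
        rw [sum_normSq_mulVec_of_conjTranspose_mul_self (mem_unitaryGroup_iff'.1 gate_unitary)]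
    _ = 1 / 2 := by rw [hψ, mul_one]

end
end
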